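/- The probability measure μ on [0,1] × P given by the product of the Gauss measure dx/((1+x)·log 2) on [0,1] and the uniform probability measure on the finite set P is invariant under the generalized Gauss shift T (which is defined off the Lebesgue-null set of rational first coordinates): μ(T⁻¹(E)) = μ(E) for every measurable subset E of [0,1] × P. -/

import Mathlib

set_option synthInstance.maxHeartbeats 1000000
set_option maxHeartbeats 1000000

open Filter MeasureTheory

noncomputable def gaussMap (x : ℝ) : ℝ := 1 / x - ⌊1 / x⌋

noncomputable def cfDigit (x : ℝ) (n : ℕ) : ℤ := ⌊1 / (gaussMap^[n] x)⌋

noncomputable def cfP (x : ℝ) : ℕ → ℤ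
  | 0 => 0
  | 1 => 1
  | n + 2 => cfDigit x (n + 1) * cfP x (n + 1) + cfP x n

noncomputable def cfQ (x : ℝ) : ℕ → ℤ
  | 0 => 1
  | 1 => cfDigit x 0
  | n + 2 => cfDigit x (n + 1) * cfQ x (n + 1) + cfQ x n

abbrev GL2 := Matrix.GeneralLinearGroup (Fin 2) ℤ

def shiftMat (k : ℤ) : GL2 :=
  ⟨!![-k, 1; 1, 0], !![0, 1; 1, k],
    by ext i j; fin_cases i <;> fin_cases j <;>
      simp [Matrix.mul_apply, Fin.sum_univ_two, Matrix.one_apply],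
    by ext i j; fin_cases i <;> fin_cases j <;>
      simp [Matrix.mul_apply, Fin.sum_univ_two, Matrix.one_apply]⟩

def cfMat (k : ℤ) : GL2 :=
  ⟨!![0, 1; 1, k], !![-k, 1; 1, 0],
    by ext i j; fin_cases i <;> fin_cases j <;>
      simp [Matrix.mul_apply, Fin.sum_univ_two, Matrix.one_apply],
    by ext i j; fin_cases i <;> fin_cases j <;>
      simp [Matrix.mul_apply, Fin.sum_univ_two, Matrix.one_apply]⟩

def negOneGL : GL2 :=
  ⟨-1, -1, by simp, by simp⟩

noncomputable def moebius (γ : GL2) (x : ℝ) : ℝ :=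
  (((γ : Matrix (Fin 2) (Fin 2) ℤ) 0 0 : ℝ) * x + ((γ : Matrix (Fin 2) (Fin 2) ℤ) 0 1 : ℝ)) /
    (((γ : Matrix (Fin 2) (Fin 2) ℤ) 1 0 : ℝ) * x + ((γ : Matrix (Fin 2) (Fin 2) ℤ) 1 1 : ℝ))

noncomputable def gaussShiftP (G : Subgroup GL2) :
    ℝ × (GL2 ⧸ G) → ℝ × (GL2 ⧸ G) :=
  fun p => (gaussMap p.1, shiftMat ⌊1 / p.1⌋ • p.2)

instance (G : Subgroup GL2) : MeasurableSpace (GL2 ⧸ G) := ⊤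

/-- The Gauss measure `dx/((1+x) log 2)` on `[0,1]`. -/
noncomputable def gaussMeasure : Measure ℝ :=
  (volume.restrict (Set.Icc (0 : ℝ) 1)).withDensity
    fun x => ENNReal.ofReal (1 / ((1 + x) * Real.log 2))

/-- The product of the Gauss measure on `[0,1]` and the uniform probability measure on the
finite coset space `P = GL(2,ℤ)/G`. -/
noncomputable def muP (G : Subgroup GL2) : Measure (ℝ × (GL2 ⧸ G)) :=
  gaussMeasure.prod (((Nat.card (GL2 ⧸ G) : ENNReal))⁻¹ • Measure.count)

lemma gauss_piece (A : Set ℝ) (hA : MeasurableSet A) (n : ℕ) :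
    gaussMeasure {x | x ∈ Set.Ioc (1 / ((n:ℝ) + 2)) (1 / ((n:ℝ) + 1)) ∧ 1 / x - ((n:ℝ) + 1) ∈ A} =
      ∫⁻ y in A ∩ Set.Ico 0 1,
        ENNReal.ofReal (1 / (((n:ℝ) + 1 + y) * ((n:ℝ) + 2 + y) * Real.log 2)) := by
  have hlog : 0 < Real.log 2 := Real.log_pos (by norm_num)
  have himg : {x | x ∈ Set.Ioc (1 / ((n:ℝ) + 2)) (1 / ((n:ℝ) + 1)) ∧ 1 / x - ((n:ℝ) + 1) ∈ A}
      = (fun y : ℝ => ((n:ℝ) + 1 + y)⁻¹) '' (A ∩ Set.Ico 0 1) := by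
    ext x
    simp only [Set.mem_setOf_eq, Set.mem_image, Set.mem_inter_iff, Set.mem_Ioc, Set.mem_Ico]
    constructor
    · rintro ⟨⟨h1, h2⟩, h3⟩
      have hx : 0 < x := lt_trans (by positivity) h1
      refine ⟨_, ⟨h3, ?_, ?_⟩, ?_⟩
      · have := (le_div_iff₀ (by positivity)).1 h2
        have : (n:ℝ) + 1 ≤ 1 / x := by rw [le_div_iff₀ hx]; linarith
        linarith
      · have := (div_lt_iff₀ (by positivity)).1 h1
        have : 1 / x < (n:ℝ) + 2 := by rw [div_lt_iff₀ hx]; linarith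
        linarith
      · simp
    · rintro ⟨y, ⟨hy, h0, h1⟩, rfl⟩
      have : (0:ℝ) < (n:ℝ) + 1 + y := by positivity
      refine ⟨⟨?_, ?_⟩, ?_⟩
      · rw [← one_div]; exact one_div_lt_one_div_of_lt this (by linarith)
      · rw [← one_div]; exact one_div_le_one_div_of_le (by positivity) (by linarith)
      · simpa using hy
  have hM : MeasurableSet (A ∩ Set.Ico (0:ℝ) 1) := hA.inter measurableSet_Ico
  have hsub : (fun y : ℝ => ((n:ℝ) + 1 + y)⁻¹) '' (A ∩ Set.Ico 0 1) ⊆ Set.Icc 0 1 := by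
    rintro _ ⟨y, ⟨_, h0, h1⟩, rfl⟩
    have : (0:ℝ) ≤ n := by positivity
    exact ⟨by positivity, inv_le_one_of_one_le₀ (by linarith)⟩
  have hinj : Set.InjOn (fun y : ℝ => ((n:ℝ) + 1 + y)⁻¹) (A ∩ Set.Ico 0 1) := by
    intro a _ b _ h
    simpa using h
  have hmimg : MeasurableSet
      {x | x ∈ Set.Ioc (1 / ((n:ℝ) + 2)) (1 / ((n:ℝ) + 1)) ∧ 1 / x - ((n:ℝ) + 1) ∈ A} := by
    apply measurableSet_Ioc.inter
    have : Measurable (fun x : ℝ => 1 / x - ((n:ℝ) + 1)) := by fun_prop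
    exact this hA
  rw [gaussMeasure, withDensity_apply _ hmimg, Measure.restrict_restrict hmimg, himg,
    Set.inter_eq_left.2 hsub,
    lintegral_image_eq_lintegral_abs_deriv_mul (f' := fun y => -1 / ((n:ℝ) + 1 + y) ^ 2) hM ?_ hinj]
  · refine setLIntegral_congr_fun hM ?_
    rintro y ⟨_, h0, h1⟩
    have : (0:ℝ) < (n:ℝ) + 1 + y := by positivity
    simp only
    rw [← ENNReal.ofReal_mul (abs_nonneg _)]
    congr 1
    rw [neg_div, abs_neg, abs_of_nonneg (by positivity)]
    have : (n:ℝ) + 2 + y ≠ 0 := by positivity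
    have : (n:ℝ) + 1 + y + 1 ≠ 0 := by positivity
    field_simp
    ring
  · rintro y ⟨_, h0, h1⟩
    have : (0:ℝ) < (n:ℝ) + 1 + y := by positivity
    exact (((hasDerivAt_id y).const_add ((n:ℝ)+1)).inv this.ne').hasDerivWithinAt

lemma gauss_tsum (y : ℝ) (hy : 0 ≤ y) :
    ∑' n : ℕ, ENNReal.ofReal (1 / (((n:ℝ) + 1 + y) * ((n:ℝ) + 2 + y) * Real.log 2)) =
      ENNReal.ofReal (1 / ((1 + y) * Real.log 2)) := by
  have hlog : 0 < Real.log 2 := Real.log_pos (by norm_num)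
  have hnn : ∀ n : ℕ, 0 ≤ 1 / (((n:ℝ) + 1 + y) * ((n:ℝ) + 2 + y) * Real.log 2) := by
    intro n; positivity
  have hs : HasSum (fun n : ℕ => 1 / (((n:ℝ) + 1 + y) * ((n:ℝ) + 2 + y) * Real.log 2))
      (1 / ((1 + y) * Real.log 2)) := by
    rw [hasSum_iff_tendsto_nat_of_nonneg hnn]
    have h : ∀ N : ℕ, ∑ n ∈ Finset.range N, 1 / (((n:ℝ) + 1 + y) * ((n:ℝ) + 2 + y) * Real.log 2)
        = 1 / ((1 + y) * Real.log 2) - ((N:ℝ) + (1 + y))⁻¹ * (1 / Real.log 2) := by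
      intro N
      induction N with
      | zero => simp; field_simp; ring
      | succ k ih =>
        rw [Finset.sum_range_succ, ih]
        have : (0:ℝ) < (k:ℝ) + 1 + y := by positivity
        have : (0:ℝ) < (k:ℝ) + 2 + y := by positivity
        have : (0:ℝ) < (k:ℝ) + 1 + (1 + y) := by positivity
        push_cast
        field_simp
        ring
    simp only [h]
    have h1 : Tendsto (fun N : ℕ => ((N:ℝ) + (1 + y))⁻¹) atTop (nhds 0) :=
      tendsto_inv_atTop_zero.comp
        (tendsto_atTop_add_const_right _ _ tendsto_natCast_atTop_atTop)
    simpa using (h1.mul_const (1 / Real.log 2)).const_sub (1 / ((1 + y) * Real.log 2))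
  rw [← ENNReal.ofReal_tsum_of_nonneg hnn hs.summable, hs.tsum_eq]

lemma gauss_digit (x : ℝ) (n : ℕ)
    (hx : x ∈ Set.Ioc (1 / ((n:ℝ) + 2)) (1 / ((n:ℝ) + 1))) : ⌊1 / x⌋ = (n:ℤ) + 1 := by
  obtain ⟨h1, h2⟩ := hx
  have hx : 0 < x := lt_trans (by positivity) h1
  rw [Int.floor_eq_iff]
  push_cast
  constructor
  · have := (le_div_iff₀ (by positivity)).1 h2
    rw [le_div_iff₀ hx]; linarith
  · have := (div_lt_iff₀ (by positivity)).1 h1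
    rw [div_lt_iff₀ hx]; linarith

/-- Decomposition of a Gauss measure according to the first digit. -/
lemma gauss_decomp (B : Set ℝ) (hB : MeasurableSet B) :
    gaussMeasure B =
      ∑' n : ℕ, gaussMeasure (Set.Ioc (1 / ((n:ℝ) + 2)) (1 / ((n:ℝ) + 1)) ∩ B) := by
  rw [← measure_iUnion]
  · apply measure_congr
    have hac : gaussMeasure ≪ volume.restrict (Set.Icc (0:ℝ) 1) := withDensity_absolutelyContinuous _ _
    have h0 : ∀ᵐ x ∂gaussMeasure, x ∈ Set.Ioc (0:ℝ) 1 := by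
      apply hac.ae_le
      have h1 : ∀ᵐ x ∂(volume.restrict (Set.Icc (0:ℝ) 1)), x ∈ Set.Icc (0:ℝ) 1 :=
        ae_restrict_mem measurableSet_Icc
      have h2 : ∀ᵐ x ∂(volume.restrict (Set.Icc (0:ℝ) 1)), x ≠ 0 :=
        ae_restrict_of_ae (Measure.ae_ne volume 0)
      filter_upwards [h1, h2] with x hx hx0
      exact ⟨lt_of_le_of_ne hx.1 hx0.symm, hx.2⟩
    filter_upwards [h0] with x hx
    apply propext
    change x ∈ B ↔ x ∈ ⋃ n : ℕ, (Set.Ioc (1 / ((n:ℝ) + 2)) (1 / ((n:ℝ) + 1)) ∩ B)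
    simp only [Set.mem_iUnion, Set.mem_inter_iff, exists_and_right]
    refine ⟨fun h => ⟨?_, h⟩, fun h => h.2⟩
    have hx1 : 1 ≤ 1 / x := by rw [le_div_iff₀ hx.1]; linarith [hx.2]
    have hf : 1 ≤ ⌊1 / x⌋ := by rw [Int.le_floor]; simpa using hx1
    obtain ⟨n, hn⟩ := Int.eq_ofNat_of_zero_le (sub_nonneg.2 hf)
    have hn' : ⌊1 / x⌋ = (n:ℤ) + 1 := by push_cast at hn; linarith
    rw [Int.floor_eq_iff] at hn'
    push_cast at hn'
    refine ⟨n, ?_, ?_⟩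
    · have := (div_lt_iff₀ hx.1).1 hn'.2
      rw [div_lt_iff₀ (by positivity)]; linarith
    · have := (le_div_iff₀ hx.1).1 hn'.1
      rw [le_div_iff₀ (by positivity)]; linarith
  · intro i j hij
    refine Set.disjoint_left.2 fun x hi hj => hij ?_
    have h1 := gauss_digit x i hi.1
    have h2 := gauss_digit x j hj.1
    omega
  · intro n
    exact measurableSet_Ioc.inter hB

lemma gauss_Ico (A : Set ℝ) (hA : MeasurableSet A) :
    gaussMeasure A = ∫⁻ y in A ∩ Set.Ico 0 1, ENNReal.ofReal (1 / ((1 + y) * Real.log 2)) := by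
  rw [gaussMeasure, withDensity_apply _ hA, ← Measure.restrict_restrict hA,
    restrict_Ico_eq_restrict_Icc]

lemma gauss_sum_pieces (A : Set ℝ) (hA : MeasurableSet A) :
    ∑' n : ℕ, gaussMeasure
      {x | x ∈ Set.Ioc (1 / ((n:ℝ) + 2)) (1 / ((n:ℝ) + 1)) ∧ 1 / x - ((n:ℝ) + 1) ∈ A} =
    gaussMeasure A := by
  simp only [gauss_piece A hA]
  rw [← lintegral_tsum, gauss_Ico A hA]
  · refine setLIntegral_congr_fun (hA.inter measurableSet_Ico) ?_
    rintro y ⟨_, h0, _⟩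
    exact gauss_tsum y h0
  · intro n
    have : Measurable fun y : ℝ =>
        ENNReal.ofReal (1 / (((n:ℝ) + 1 + y) * ((n:ℝ) + 2 + y) * Real.log 2)) := by fun_prop
    exact this.aemeasurable

lemma meas_skew {P : Type*} [MeasurableSpace P] [DiscreteMeasurableSpace P] [Countable P]
    (f : ℤ → P → P) : Measurable fun p : ℝ × P => (gaussMap p.1, f ⌊1 / p.1⌋ p.2) := by
  have hfl : Measurable fun p : ℝ × P => ⌊1 / p.1⌋ :=
    Int.measurable_floor.comp (measurable_fst.const_div 1)
  refine Measurable.prodMk ?_ ?_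
  · unfold gaussMap
    have h2 : Measurable fun z : ℤ => (z : ℝ) := Measurable.of_discrete
    exact (measurable_fst.const_div 1).sub (h2.comp hfl)
  · have h2 : Measurable fun q : ℤ × P => f q.1 q.2 := Measurable.of_discrete
    exact h2.comp (hfl.prodMk measurable_snd)

/-- the product of the Gauss measure and the uniform probability measure on `P`
is invariant under the generalized Gauss shift. -/
theorem stmt5 (G : Subgroup GL2) (hGfin : G.FiniteIndex) (hneg : negOneGL ∈ G)
    (E : Set (ℝ × (GL2 ⧸ G))) (hE : MeasurableSet E) :
    muP G (gaussShiftP G ⁻¹' E) = muP G E := by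
  have : Finite (GL2 ⧸ G) := Subgroup.finite_quotient_of_finiteIndex
  have : DiscreteMeasurableSpace (GL2 ⧸ G) := ⟨fun _ => trivial⟩
  have : SFinite gaussMeasure := by unfold gaussMeasure; infer_instance
  have hT : Measurable (gaussShiftP G) :=
    meas_skew (fun k (s : GL2 ⧸ G) => shiftMat k • s)
  have key : ∀ F : Set (ℝ × (GL2 ⧸ G)), MeasurableSet F →
      muP G F = ((Nat.card (GL2 ⧸ G) : ENNReal))⁻¹ *
        ∑' s, gaussMeasure ((fun x => (x, s)) ⁻¹' F) := by
    intro F hF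
    rw [muP, Measure.prod_apply_symm hF, lintegral_smul_measure, lintegral_count, smul_eq_mul]
  rw [key _ (hT hE), key _ hE]
  congr 1
  have hsec : ∀ s : GL2 ⧸ G, MeasurableSet ((fun x : ℝ => (x, s)) ⁻¹' E) := fun s =>
    measurable_prodMk_right hE
  have h1 : ∀ s : GL2 ⧸ G, gaussMeasure ((fun x => (x, s)) ⁻¹' (gaussShiftP G ⁻¹' E)) =
      ∑' n : ℕ, gaussMeasure {x | x ∈ Set.Ioc (1 / ((n:ℝ) + 2)) (1 / ((n:ℝ) + 1)) ∧
        1 / x - ((n:ℝ) + 1) ∈ (fun x : ℝ => (x, shiftMat ((n:ℤ) + 1) • s)) ⁻¹' E} := by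
    intro s
    rw [gauss_decomp _ (measurable_prodMk_right (hT hE))]
    congr 1
    ext n
    congr 1
    ext x
    simp only [Set.mem_inter_iff, Set.mem_setOf_eq, Set.mem_preimage]
    refine and_congr_right fun hx => ?_
    have hd := gauss_digit x n hx
    simp only [gaussShiftP, gaussMap, hd]
    push_cast
    rfl
  simp only [h1]
  rw [ENNReal.tsum_comm]
  have h2 : ∀ n : ℕ, ∑' s : GL2 ⧸ G,
      gaussMeasure {x | x ∈ Set.Ioc (1 / ((n:ℝ) + 2)) (1 / ((n:ℝ) + 1)) ∧
        1 / x - ((n:ℝ) + 1) ∈ (fun x : ℝ => (x, shiftMat ((n:ℤ) + 1) • s)) ⁻¹' E} =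
      ∑' s : GL2 ⧸ G,
      gaussMeasure {x | x ∈ Set.Ioc (1 / ((n:ℝ) + 2)) (1 / ((n:ℝ) + 1)) ∧
        1 / x - ((n:ℝ) + 1) ∈ (fun x : ℝ => (x, s)) ⁻¹' E} := by
    intro n
    exact (MulAction.toPerm (shiftMat ((n:ℤ) + 1)) : Equiv.Perm (GL2 ⧸ G)).tsum_eq
      (fun s => gaussMeasure {x | x ∈ Set.Ioc (1 / ((n:ℝ) + 2)) (1 / ((n:ℝ) + 1)) ∧
        1 / x - ((n:ℝ) + 1) ∈ (fun x : ℝ => (x, s)) ⁻¹' E})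
  simp only [h2]
  rw [ENNReal.tsum_comm]
  congr 1
  ext s
  exact gauss_sum_pieces _ (hsec s)
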